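/- Let k be a field, and let φ: k[x₁,…,x₇] → k[ℤ⁴] be the k-algebra homomorphism from the polynomial ring in seven variables to the group algebra of ℤ⁴ over k sending xᵢ to the basis element χ^{hᵢ} for 1 ≤ i ≤ 7. Then the kernel of φ is the ideal generated by the six binomials x₁x₆ − x₃x₅, x₄x₆ − x₂x₇, x₇² − x₂x₄x₅, x₆x₇ − x₂²x₅, x₃x₇ − x₁x₂², and x₃x₄x₅ − x₁x₂x₇. -/

import Mathlib

open MvPolynomial

/-- The seven lattice points `h₁, …, h₇` (0-indexed as `h 0, …, h 6`). -/
def h : Fin 7 → (Fin 4 → ℤ) :=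
  ![![1,0,0,0], ![0,1,0,0], ![0,0,1,0], ![0,0,0,1],
    ![2,3,-2,-1], ![1,3,-1,-1], ![1,2,-1,0]]

/-- The degree `∑ aᵢ hᵢ ∈ ℤ⁴` of the monomial with exponent vector `a`. -/
def latticeDegree (a : Fin 7 → ℕ) : Fin 4 → ℤ := ∑ i, a i • h i

/-- Exponent vectors of the leading monomials of the six binomials. -/
def leadExponent : Fin 6 → Fin 7 → ℕ :=
  ![![1,0,0,0,0,1,0], ![0,0,0,1,0,1,0], ![0,0,0,0,0,0,2],
    ![0,0,0,0,0,1,1], ![0,0,1,0,0,0,1], ![0,0,1,1,1,0,0]]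

/-- Exponent vectors of the trailing monomials of the six binomials. -/
def tailExponent : Fin 6 → Fin 7 → ℕ :=
  ![![0,0,1,0,1,0,0], ![0,1,0,0,0,0,1], ![0,1,0,1,1,0,0],
    ![0,2,0,0,1,0,0], ![1,2,0,0,0,0,0], ![1,1,0,0,0,0,1]]

/-- A weight for which each leading monomial is heavier than the trailing one. -/
def exponentWeight (a : Fin 7 → ℕ) : ℕ := ∑ i, a i * ![1,0,1,3,0,1,2] i

lemma latticeDegree_add (a b : Fin 7 → ℕ) :
    latticeDegree (a + b) = latticeDegree a + latticeDegree b := by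
  simp [latticeDegree, add_smul, Finset.sum_add_distrib]

lemma exponentWeight_add (a b : Fin 7 → ℕ) :
    exponentWeight (a + b) = exponentWeight a + exponentWeight b := by
  simp [exponentWeight, add_mul, Finset.sum_add_distrib]

lemma latticeDegree_lead_eq_tail :
    ∀ j, latticeDegree (leadExponent j) = latticeDegree (tailExponent j) := by
  decide

lemma exponentWeight_tail_lt_lead :
    ∀ j, exponentWeight (tailExponent j) < exponentWeight (leadExponent j) := by
  decide

/-- An exponent vector is standard if no leading monomial divides its monomial. -/
def IsStandard (a : Fin 7 → ℕ) : Prop := ∀ j, ¬ leadExponent j ≤ a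

lemma IsStandard.eq_of_latticeDegree_eq {a b : Fin 7 → ℕ} (ha : IsStandard a)
    (hb : IsStandard b) (hab : latticeDegree a = latticeDegree b) : a = b := by
  have h0 := congrFun hab 0
  have h1 := congrFun hab 1
  have h2 := congrFun hab 2
  have h3 := congrFun hab 3
  simp [latticeDegree, Fin.sum_univ_seven, h] at h0 h1 h2 h3
  simp only [IsStandard, Pi.le_def, Fin.forall_fin_succ, leadExponent] at ha hb
  simp at ha hb
  simp only [_root_.funext_iff, Fin.forall_fin_succ]
  simp
  clear hab
  grind (splits := 30)

/-- Modulo the six relations, every monomial equals a standard one of the same degree. -/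
lemma exists_isStandard_prod_eq {R : Type*} [CommRing R] (x : Fin 7 → R)
    (hx : ∀ j, ∏ i, x i ^ leadExponent j i = ∏ i, x i ^ tailExponent j i) (a : Fin 7 → ℕ) :
    ∃ b, IsStandard b ∧ latticeDegree b = latticeDegree a ∧
      ∏ i, x i ^ b i = ∏ i, x i ^ a i := by
  induction hn : exponentWeight a using Nat.strong_induction_on generalizing a with
  | _ n ih =>
    by_cases ha : IsStandard a
    · exact ⟨a, ha, rfl, rfl⟩
    · obtain ⟨j, hj⟩ : ∃ j, leadExponent j ≤ a := by simpa [IsStandard] using ha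
      obtain ⟨c, rfl⟩ := exists_add_of_le hj
      have hlt : exponentWeight (tailExponent j + c) < n := by
        rw [← hn, exponentWeight_add, exponentWeight_add]
        exact Nat.add_lt_add_right (exponentWeight_tail_lt_lead j) _
      obtain ⟨b, hb, hdeg, hprod⟩ := ih _ hlt _ rfl
      refine ⟨b, hb, ?_, ?_⟩
      · rw [hdeg, latticeDegree_add, latticeDegree_add, latticeDegree_lead_eq_tail]
      · rw [hprod]
        simp only [Pi.add_apply, pow_add, Finset.prod_mul_distrib, hx]

lemma prod_eq_of_latticeDegree_eq {R : Type*} [CommRing R] (x : Fin 7 → R)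
    (hx : ∀ j, ∏ i, x i ^ leadExponent j i = ∏ i, x i ^ tailExponent j i) {a b : Fin 7 → ℕ}
    (hab : latticeDegree a = latticeDegree b) : ∏ i, x i ^ a i = ∏ i, x i ^ b i := by
  obtain ⟨a', ha', hda, hpa⟩ := exists_isStandard_prod_eq x hx a
  obtain ⟨b', hb', hdb, hpb⟩ := exists_isStandard_prod_eq x hx b
  rw [← hpa, ← hpb, ha'.eq_of_latticeDegree_eq hb' (by rw [hda, hdb, hab])]

/-- An ideal that identifies any two monomials with the same image contains the kernel of a
monomial map to an additive monoid algebra. -/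
lemma ker_aeval_of'_le {k σ A : Type*} [CommRing k] [AddCommMonoid A] (d : σ → A)
    (I : Ideal (MvPolynomial σ k))
    (hI : ∀ a b : σ →₀ ℕ, (a.sum fun i n => n • d i) = (b.sum fun i n => n • d i) →
      Ideal.Quotient.mk I (monomial a 1) = Ideal.Quotient.mk I (monomial b 1)) :
    RingHom.ker (aeval (fun i => AddMonoidAlgebra.of' k A (d i)) :
      MvPolynomial σ k →ₐ[k] AddMonoidAlgebra k A) ≤ I := by
  let D : (σ →₀ ℕ) → A := fun a => a.sum fun i n => n • d i
  let s : A → MvPolynomial σ k ⧸ I := fun u =>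
    Ideal.Quotient.mk I (monomial (Function.invFun D u) 1)
  have hs (a : σ →₀ ℕ) : s (D a) = Ideal.Quotient.mk I (monomial a 1) :=
    hI _ _ (Function.invFun_eq (f := D) ⟨a, rfl⟩)
  let φ : MvPolynomial σ k →ₐ[k] AddMonoidAlgebra k A :=
    aeval (fun i => AddMonoidAlgebra.of' k A (d i))
  let ψ : AddMonoidAlgebra k A →ₗ[k] MvPolynomial σ k ⧸ I :=
    (Finsupp.linearCombination k s) ∘ₗ (AddMonoidAlgebra.coeffLinearEquiv k).toLinearMap
  have hφ (a : σ →₀ ℕ) : φ (monomial a 1) = AddMonoidAlgebra.single (D a) 1 := by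
    simp [φ, D, aeval_monomial, Finsupp.prod, Finsupp.sum]
  have hψ : ψ ∘ₗ φ.toLinearMap = (Ideal.Quotient.mkₐ k I).toLinearMap := by
    refine (basisMonomials σ k).ext fun a => ?_
    simp [hφ, ψ, hs]
  intro p hp
  have hp' : φ p = 0 := hp
  rw [← Ideal.Quotient.eq_zero_iff_mem]
  simpa [hp'] using (LinearMap.congr_fun hψ p).symm

/-- The kernel of the `k`-algebra map `k[x₁,…,x₇] → k[ℤ⁴]`, `xᵢ ↦ χ^{hᵢ}`, is generated
by the six binomials `x₁x₆−x₃x₅`, `x₄x₆−x₂x₇`, `x₇²−x₂x₄x₅`, `x₆x₇−x₂²x₅`, `x₃x₇−x₁x₂²`,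
`x₃x₄x₅−x₁x₂x₇`. -/
theorem stmt_19 (k : Type*) [Field k] :
    RingHom.ker ((MvPolynomial.aeval
        (fun i : Fin 7 => AddMonoidAlgebra.of' k (Fin 4 → ℤ) (h i)) :
        MvPolynomial (Fin 7) k →ₐ[k] AddMonoidAlgebra k (Fin 4 → ℤ)) : MvPolynomial (Fin 7) k →+* AddMonoidAlgebra k (Fin 4 → ℤ)) =
      Ideal.span {X 0 * X 5 - X 2 * X 4,
                  X 3 * X 5 - X 1 * X 6,
                  X 6 ^ 2 - X 1 * X 3 * X 4,
                  X 5 * X 6 - X 1 ^ 2 * X 4,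
                  X 2 * X 6 - X 0 * X 1 ^ 2,
                  X 2 * X 3 * X 4 - X 0 * X 1 * X 6} := by
  apply le_antisymm
  · refine ker_aeval_of'_le h _ fun a b hab => ?_
    rw [Finsupp.sum_fintype _ _ (by simp), Finsupp.sum_fintype _ _ (by simp)] at hab
    simp only [monomial_eq, C_1, one_mul, Finsupp.prod_pow, map_prod, map_pow]
    refine prod_eq_of_latticeDegree_eq _ (fun j => ?_) hab
    simp only [← map_pow, ← map_prod]
    rw [Ideal.Quotient.eq]
    apply Ideal.subset_span
    fin_cases j <;> simp [leadExponent, tailExponent, Fin.prod_univ_seven]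
  · rw [Ideal.span_le]
    rintro p (rfl | rfl | rfl | rfl | rfl | rfl) <;>
    · simp [RingHom.mem_ker, sub_eq_zero, AddMonoidAlgebra.single_mul_single,
        AddMonoidAlgebra.single_pow]
      congr 1
      decide
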